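/- Let q = p^α where p ≡ 1 (mod 8) is prime and α ≥ 1. Let χ₄ be a Dirichlet character mod q of order 4, let φ = χ₄² be the quadratic character and ε the trivial character mod q. Set ρ = J(χ₄,χ₄), ξ = J(χ₄,φ), M₃ = q²·₃F₂(χ₄, χ̄₄, χ̄₄; φ, ε | 1) and M₅ = q²·₃F₂(χ₄, χ₄, χ̄₄; ε, ε | 1). Then the number of cliques of order 4 in the Peisert-like graph G*(q) satisfies k₄(G*(q)) = (p^{2α−1}(p−1)/3072)·[ 2p^{2α−2}(p²−20p+81) + 2·Im(ρ)² + 4·Im(ρ)·Im(ξ) − Re(M₃) + 3·M₅ ] (an equality of complex numbers, the left side being a natural number). -/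

import Mathlib

open Finset

def peisertSet (n : ℕ) (g : (ZMod n)ˣ) : Set (ZMod n) :=
  {z | ∃ k : ℤ, z = ((g ^ (4 * k) : (ZMod n)ˣ) : ZMod n) ∨ z = ((g * g ^ (4 * k) : (ZMod n)ˣ) : ZMod n)}

def peisertGraph (n : ℕ) (g : (ZMod n)ˣ) : SimpleGraph (ZMod n) :=
  SimpleGraph.fromRel (fun x y => x - y ∈ peisertSet n g)

noncomputable instance (n : ℕ) (g : (ZMod n)ˣ) : DecidableRel (peisertGraph n g).Adj :=
  Classical.decRel _

/-- The complex-conjugate Dirichlet character. -/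
noncomputable def conjChar {q : ℕ} (A : DirichletCharacter ℂ q) : DirichletCharacter ℂ q :=
  A.ringHomComp (starRingEnd ℂ)

/-- The binomial coefficient `binom(A,B) = B(-1)/q * J(A, B̄)` for Dirichlet characters. -/
noncomputable def dBinom {q : ℕ} [NeZero q] (A B : DirichletCharacter ℂ q) : ℂ :=
  B (-1) / q * jacobiSum A (conjChar B)

/-- The hypergeometric function `₃F₂` for Dirichlet characters. -/
noncomputable def threeF₂ {q : ℕ} [NeZero q] (A B C D E : DirichletCharacter ℂ q)
    (x : ZMod q) : ℂ :=
  (q / (Nat.totient q : ℂ)) *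
    ∑ᶠ χ : DirichletCharacter ℂ q,
      dBinom (A * χ) χ * dBinom (B * χ) (D * χ) * dBinom (C * χ) (E * χ) * χ x

/-- The sum over all quadruples of the product of six edge weights on the complete graph `K₄`. -/
noncomputable def edgeSum {R : Type*} [CommRing R] [Fintype R] (A B C D E G : R → ℂ) : ℂ :=
  ∑ x, ∑ y, ∑ z, ∑ w, A (x - y) * B (x - z) * C (x - w) * D (y - z) * E (y - w) * G (z - w)

section EdgeSum

variable {R : Type*} [CommRing R] [Fintype R]

lemma edgeSum_swap_fst {A : R → ℂ} (hA : A.Even) (B C D E G : R → ℂ) :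
    edgeSum A B C D E G = edgeSum A D E B C G := by
  unfold edgeSum
  rw [sum_comm]
  refine sum_congr rfl fun y _ => sum_congr rfl fun x _ => sum_congr rfl fun z _ =>
    sum_congr rfl fun w _ => ?_
  rw [← hA (x - y), neg_sub]; ring

lemma edgeSum_swap_mid {D : R → ℂ} (hD : D.Even) (A B C E G : R → ℂ) :
    edgeSum A B C D E G = edgeSum B A C D G E := by
  unfold edgeSum
  refine sum_congr rfl fun x _ => ?_
  rw [sum_comm]
  refine sum_congr rfl fun z _ => sum_congr rfl fun y _ => sum_congr rfl fun w _ => ?_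
  rw [← hD (y - z), neg_sub]; ring

lemma edgeSum_swap_last {G : R → ℂ} (hG : G.Even) (A B C D E : R → ℂ) :
    edgeSum A B C D E G = edgeSum A C B E D G := by
  unfold edgeSum
  refine sum_congr rfl fun x _ => sum_congr rfl fun y _ => ?_
  rw [sum_comm]
  refine sum_congr rfl fun w _ => sum_congr rfl fun z _ => ?_
  rw [← hG (z - w), neg_sub]; ring

lemma edgeSum_const_mul (a b c d e g : ℂ) (A B C D E G : R → ℂ) :
    edgeSum (fun x => a * A x) (fun x => b * B x) (fun x => c * C x) (fun x => d * D x)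
      (fun x => e * E x) (fun x => g * G x) = a * b * c * d * e * g * edgeSum A B C D E G := by
  simp only [edgeSum, mul_sum]
  refine sum_congr rfl fun x _ => sum_congr rfl fun y _ => sum_congr rfl fun z _ =>
    sum_congr rfl fun w _ => ?_
  ring

/-- Expansion of `edgeSum` of a sum of two even weights, grouped by isomorphism type of the
subgraph of `K₄` on which the second weight is chosen. -/
lemma edgeSum_add {X Y : R → ℂ} (hX : X.Even) (hY : Y.Even) :
    edgeSum (X + Y) (X + Y) (X + Y) (X + Y) (X + Y) (X + Y) =
      edgeSum X X X X X X + 6 * edgeSum X X Y X X X +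
      12 * edgeSum Y Y X X X X + 3 * edgeSum X X Y Y X X +
      4 * edgeSum X X Y X Y Y + 4 * edgeSum Y Y X Y X X + 12 * edgeSum Y X X X Y Y +
      3 * edgeSum X Y Y Y Y X + 12 * edgeSum Y Y Y Y X X +
      6 * edgeSum Y Y X Y Y Y + edgeSum Y Y Y Y Y Y := by
  let T : Bool → Bool → Bool → Bool → Bool → Bool → ℂ := fun a b c d e g =>
    edgeSum (cond a X Y) (cond b X Y) (cond c X Y) (cond d X Y) (cond e X Y) (cond g X Y)
  have even : ∀ b : Bool, (cond b X Y).Even := fun b => by cases b <;> assumption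
  have h1 : ∀ a b c d e g, T a b c d e g = T a d e b c g := fun a _ _ _ _ _ =>
    edgeSum_swap_fst (even a) _ _ _ _ _
  have h2 : ∀ a b c d e g, T a b c d e g = T b a c d g e := fun _ _ _ d _ _ =>
    edgeSum_swap_mid (even d) _ _ _ _ _
  have h3 : ∀ a b c d e g, T a b c d e g = T a c b e d g := fun _ _ _ _ _ g =>
    edgeSum_swap_last (even g) _ _ _ _ _
  have expand : edgeSum (X + Y) (X + Y) (X + Y) (X + Y) (X + Y) (X + Y) =
      ∑ a, ∑ b, ∑ c, ∑ d, ∑ e, ∑ g, T a b c d e g := by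
    simp only [T, edgeSum, Fintype.sum_bool, cond, Pi.add_apply, ← sum_add_distrib]
    refine sum_congr rfl fun x _ => sum_congr rfl fun y _ => sum_congr rfl fun z _ =>
      sum_congr rfl fun w _ => ?_
    ring
  rw [expand]
  change _ = T true true true true true true + 6 * T true true false true true true +
      12 * T false false true true true true + 3 * T true true false false true true +
      4 * T true true false true false false + 4 * T false false true false true true +
      12 * T false true true true false false +
      3 * T true false false false false true + 12 * T false false false false true true +
      6 * T false false true false false false + T false false false false false false
  clear_value T
  simp only [Fintype.sum_bool]
  grind

end EdgeSum

/-- The indicator function of the nonzero elements. -/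
noncomputable def nonzeroInd {F : Type*} [Zero F] [DecidableEq F] (x : F) : ℂ :=
  if x = 0 then 0 else 1

lemma sum_comp_sub {F : Type*} [AddCommGroup F] [Fintype F] (f : F → ℂ) (x : F) : ∑ z, f (x - z) = ∑ z, f z :=
  Equiv.sum_comp (Equiv.subLeft x) f

lemma sum_sum_comp_sub {F : Type*} [AddCommGroup F] [Fintype F] (f : F → ℂ) :
    ∑ x, ∑ y, f (x - y) = Fintype.card F * ∑ x, f x := by
  simp [sum_comp_sub]

section SignSums

variable {F : Type*} [Field F] [DecidableEq F]

lemma nonzeroInd_even : (nonzeroInd : F → ℂ).Even := fun x => by simp [nonzeroInd]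

lemma nonzeroInd_zero : nonzeroInd (0 : F) = 0 := if_pos rfl

lemma nonzeroInd_mul_self (x : F) : nonzeroInd x * nonzeroInd x = nonzeroInd x := by
  simp [nonzeroInd]

lemma mul_nonzeroInd {f : F → ℂ} (hf : f 0 = 0) (x : F) : f x * nonzeroInd x = f x := by
  by_cases h : x = 0 <;> simp [nonzeroInd, h, hf]

lemma apply_zero_of_mul_self {s : F → ℂ} (hs : ∀ x, s x * s x = nonzeroInd x) : s 0 = 0 := by
  simpa [nonzeroInd] using hs 0

variable [Fintype F]

lemma sum_nonzeroInd : ∑ x : F, nonzeroInd x = Fintype.card F - 1 := by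
  have h (x : F) : nonzeroInd x = 1 - if x = 0 then 1 else 0 := by
    by_cases h : x = 0 <;> simp [nonzeroInd, h]
  simp [h]

lemma sum_sub_mul_nonzeroInd (f : F → ℂ) (x y : F) :
    ∑ z, f (x - z) * nonzeroInd (y - z) = ∑ z, f z - f (x - y) := by
  have h (z : F) : f (x - z) * nonzeroInd (y - z) =
      f (x - z) - if y = z then f (x - z) else 0 := by
    by_cases h : y = z <;> simp [nonzeroInd, h, sub_eq_zero]
  simp [h, sum_sub_distrib, sum_comp_sub]

lemma mul_sum_sub_mul_nonzeroInd_mul {D : F → ℂ} (hD : D 0 = 0) (f : F → ℂ) (x y z : F) :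
    D (y - z) * ∑ w, f (x - w) * nonzeroInd (y - w) * nonzeroInd (z - w) =
      D (y - z) * (∑ w, f w - f (x - y) - f (x - z)) := by
  by_cases hyz : y = z
  · simp [hyz, hD]
  have h (w : F) : f (x - w) * nonzeroInd (y - w) * nonzeroInd (z - w) =
      f (x - w) - (if y = w then f (x - w) else 0) - if z = w then f (x - w) else 0 := by
    by_cases h : y = w
    · subst h; simp [nonzeroInd, Ne.symm hyz]
    · by_cases h' : z = w <;> simp [nonzeroInd, h, h', sub_eq_zero]
  simp [h, sum_sub_distrib, sum_comp_sub]

/-- Summing out the last vertex when only one of its edges carries a weight. -/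
lemma edgeSum_pendant {D : F → ℂ} (hD : D 0 = 0) (A B C : F → ℂ) :
    edgeSum A B C D nonzeroInd nonzeroInd =
      ∑ x, ∑ y, ∑ z, A (x - y) * B (x - z) * D (y - z) *
        (∑ w, C w - C (x - y) - C (x - z)) := by
  unfold edgeSum
  refine sum_congr rfl fun x _ => sum_congr rfl fun y _ => sum_congr rfl fun z _ => ?_
  rw [mul_assoc, ← mul_sum_sub_mul_nonzeroInd_mul hD, ← mul_assoc, mul_sum]
  exact sum_congr rfl fun w _ => by ring

lemma edgeSum_nonzeroInd :
    edgeSum (R := F) nonzeroInd nonzeroInd nonzeroInd nonzeroInd nonzeroInd nonzeroInd =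
      Fintype.card F * (Fintype.card F - 1) * (Fintype.card F - 2) * (Fintype.card F - 3) := by
  rw [edgeSum_pendant nonzeroInd_zero]
  have h (x y : F) : ∑ z, nonzeroInd (x - y) * nonzeroInd (x - z) * nonzeroInd (y - z) *
      (∑ w : F, nonzeroInd w - nonzeroInd (x - y) - nonzeroInd (x - z)) =
      (Fintype.card F - 3) * (Fintype.card F - 2) * nonzeroInd (x - y) := by
    calc _ = ∑ z, (Fintype.card F - 3) * nonzeroInd (x - y) *
          (nonzeroInd (x - z) * nonzeroInd (y - z)) := by
          refine sum_congr rfl fun z _ => ?_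
          rw [sum_nonzeroInd]
          linear_combination -nonzeroInd (x - z) * nonzeroInd (y - z) *
            nonzeroInd_mul_self (x - y) - nonzeroInd (x - y) * nonzeroInd (y - z) *
            nonzeroInd_mul_self (x - z)
      _ = _ := by
          rw [← mul_sum, sum_sub_mul_nonzeroInd, sum_nonzeroInd]
          linear_combination -(Fintype.card F - 3 : ℂ) * nonzeroInd_mul_self (x - y)
  simp only [h]
  rw [sum_sum_comp_sub (fun d : F => (Fintype.card F - 3 : ℂ) * (Fintype.card F - 2) * nonzeroInd d),
    ← mul_sum, sum_nonzeroInd]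
  ring

variable {s : F → ℂ}

lemma edgeSum_adjacent (hs : ∀ x, s x * s x = nonzeroInd x) (hsum : ∑ x, s x = 0) :
    edgeSum s s nonzeroInd nonzeroInd nonzeroInd nonzeroInd =
      -(Fintype.card F * (Fintype.card F - 1) * (Fintype.card F - 3)) := by
  rw [edgeSum_pendant nonzeroInd_zero]
  have h (x y : F) : ∑ z, s (x - y) * s (x - z) * nonzeroInd (y - z) *
      (∑ w : F, nonzeroInd w - nonzeroInd (x - y) - nonzeroInd (x - z)) =
      -(Fintype.card F - 3) * nonzeroInd (x - y) := by
    calc _ = ∑ z, (Fintype.card F - 3) * s (x - y) * (s (x - z) * nonzeroInd (y - z)) := by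
          refine sum_congr rfl fun z _ => ?_
          rw [sum_nonzeroInd]
          linear_combination -s (x - z) * nonzeroInd (y - z) *
            mul_nonzeroInd (apply_zero_of_mul_self hs) (x - y) - s (x - y) * nonzeroInd (y - z) *
            mul_nonzeroInd (apply_zero_of_mul_self hs) (x - z)
      _ = _ := by
          rw [← mul_sum, sum_sub_mul_nonzeroInd, hsum]
          linear_combination -(Fintype.card F - 3 : ℂ) * hs (x - y)
  simp only [h]
  rw [sum_sum_comp_sub (fun d : F => -(Fintype.card F - 3 : ℂ) * nonzeroInd d),
    ← mul_sum, sum_nonzeroInd]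
  ring

lemma sum_sign_mul_sign_mul_nonzeroInd (heven : s.Even)
    (hs : ∀ x, s x * s x = nonzeroInd x) (hsum : ∑ x, s x = 0) :
    ∑ x, ∑ y, ∑ z, s (x - y) * (s (y - z) * nonzeroInd (x - z)) =
      -(Fintype.card F * (Fintype.card F - 1)) := by
  simp only [← mul_sum, sum_sub_mul_nonzeroInd, hsum]
  have h (x y : F) : s (x - y) * (0 - s (y - x)) = -nonzeroInd (x - y) := by
    rw [← heven (y - x), neg_sub]; linear_combination -hs (x - y)
  simp only [h]
  rw [sum_sum_comp_sub (fun d : F => -nonzeroInd d), sum_neg_distrib, sum_nonzeroInd]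
  ring

lemma sum_sign_pendant (heven : s.Even)
    (hs : ∀ x, s x * s x = nonzeroInd x) (hsum : ∑ x, s x = 0) :
    ∑ x, ∑ y, ∑ z, (-(s (x - y) * (s (y - z) * nonzeroInd (x - z))) -
      s (x - z) * (s (z - y) * nonzeroInd (x - y))) =
      2 * (Fintype.card F * (Fintype.card F - 1)) := by
  have h : ∑ x, ∑ y, ∑ z, s (x - z) * (s (z - y) * nonzeroInd (x - y)) =
      -(Fintype.card F * (Fintype.card F - 1)) := by
    rw [← sum_sign_mul_sign_mul_nonzeroInd heven hs hsum]
    exact sum_congr rfl fun x _ => sum_comm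
  simp only [sum_sub_distrib, sum_neg_distrib, sum_sign_mul_sign_mul_nonzeroInd heven hs hsum, h]
  ring

lemma edgeSum_opposite (heven : s.Even)
    (hs : ∀ x, s x * s x = nonzeroInd x) (hsum : ∑ x, s x = 0) :
    edgeSum nonzeroInd nonzeroInd s s nonzeroInd nonzeroInd =
      2 * (Fintype.card F * (Fintype.card F - 1)) := by
  rw [edgeSum_pendant (apply_zero_of_mul_self hs), ← sum_sign_pendant heven hs hsum, hsum]
  refine sum_congr rfl fun x _ => sum_congr rfl fun y _ => sum_congr rfl fun z _ => ?_
  rw [← heven (z - y), neg_sub]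
  linear_combination -s (y - z) * nonzeroInd (x - z) * mul_nonzeroInd (apply_zero_of_mul_self hs) (x - y) -
    s (y - z) * nonzeroInd (x - y) * mul_nonzeroInd (apply_zero_of_mul_self hs) (x - z)

lemma edgeSum_paw (heven : s.Even)
    (hs : ∀ x, s x * s x = nonzeroInd x) (hsum : ∑ x, s x = 0) :
    edgeSum s s s s nonzeroInd nonzeroInd = 2 * (Fintype.card F * (Fintype.card F - 1)) := by
  rw [edgeSum_pendant (apply_zero_of_mul_self hs), ← sum_sign_pendant heven hs hsum, hsum]
  refine sum_congr rfl fun x _ => sum_congr rfl fun y _ => sum_congr rfl fun z _ => ?_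
  rw [← heven (z - y), neg_sub]
  linear_combination -s (y - z) * s (x - z) * hs (x - y) - s (y - z) * s (x - y) * hs (x - z)

lemma edgeSum_fourCycle (heven : s.Even) (hs : ∀ x, s x * s x = nonzeroInd x) :
    edgeSum nonzeroInd s s s s nonzeroInd =
      Fintype.card F * (∑ d, nonzeroInd d * (∑ t, s t * s (d - t)) ^ 2 -
        (Fintype.card F - 1) * (Fintype.card F - 2)) := by
  have conv (x y : F) : ∑ w, s (x - w) * s (y - w) = ∑ t, s t * s (x - y - t) := by
    rw [← sum_comp_sub (fun t => s t * s (x - y - t)) x]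
    refine sum_congr rfl fun w _ => ?_
    rw [← heven (y - w)]; congr 2; ring
  have inner (x y z : F) : ∑ w, s (x - w) * s (y - w) * nonzeroInd (z - w) =
      ∑ t, s t * s (x - y - t) - s (x - z) * s (y - z) := by
    have h (w : F) : s (x - w) * s (y - w) * nonzeroInd (z - w) =
        s (x - w) * s (y - w) - if z = w then s (x - w) * s (y - w) else 0 := by
      by_cases h : z = w <;> simp [nonzeroInd, h, sub_eq_zero]
    simp [h, sum_sub_distrib, conv]
  have h (x y : F) : ∑ z, ∑ w, nonzeroInd (x - y) * s (x - z) * s (x - w) * s (y - z) *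
      s (y - w) * nonzeroInd (z - w) = nonzeroInd (x - y) * (∑ t, s t * s (x - y - t)) ^ 2 -
        (Fintype.card F - 2) * nonzeroInd (x - y) := by
    calc _ = ∑ z, nonzeroInd (x - y) * (∑ t, s t * s (x - y - t) * (s (x - z) * s (y - z)) -
          nonzeroInd (x - z) * nonzeroInd (y - z)) := by
          refine sum_congr rfl fun z _ => ?_
          rw [← sum_mul, ← hs (x - z), ← hs (y - z)]
          calc _ = nonzeroInd (x - y) * (s (x - z) * s (y - z)) *
                ∑ w, s (x - w) * s (y - w) * nonzeroInd (z - w) := by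
                rw [mul_sum]; exact sum_congr rfl fun w _ => by ring
            _ = _ := by rw [inner]; ring
      _ = _ := by
          rw [← mul_sum, sum_sub_distrib, sum_sub_mul_nonzeroInd, sum_nonzeroInd]
          simp only [← sum_mul, ← mul_sum, conv]
          linear_combination nonzeroInd_mul_self (x - y)
  unfold edgeSum
  simp only [h]
  rw [sum_sum_comp_sub (fun d : F => nonzeroInd d * (∑ t, s t * s (d - t)) ^ 2 -
    (Fintype.card F - 2) * nonzeroInd d), sum_sub_distrib, ← mul_sum, sum_nonzeroInd]
  ring

end SignSums

/-- The sum over `K₄` weights with two vertices normalised to `0` and `1`. -/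
noncomputable def normalizedSum {R : Type*} [CommRing R] [Fintype R] (B C D E G : R → ℂ) : ℂ :=
  ∑ b, ∑ c, B b * C c * D (1 - b) * E (1 - c) * G (b - c)

section CharacterSums

variable {F : Type*} [Field F]

lemma MulChar.even_of_neg_one {χ : MulChar F ℂ} (h : χ (-1) = 1) : (χ : F → ℂ).Even := fun x => by
  rw [neg_eq_neg_one_mul, map_mul, h, one_mul]

lemma MulChar.apply_inv_sub_inv {χ : MulChar F ℂ} (hχ : χ (-1) = 1) {x y : F} (hx : x ≠ 0)
    (hy : y ≠ 0) : χ (x⁻¹ - y⁻¹) = χ⁻¹ x * χ⁻¹ y * χ (x - y) := by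
  rw [inv_sub_inv hx hy, div_eq_mul_inv, map_mul, ← MulChar.even_of_neg_one hχ (x - y), neg_sub,
    mul_inv, map_mul, MulChar.inv_apply', MulChar.inv_apply']
  ring

variable [Fintype F]

lemma edgeSum_scale {t : F} (ht : t ≠ 0) (A B C D E G : F → ℂ) :
    edgeSum (fun x => A (t * x)) (fun x => B (t * x)) (fun x => C (t * x)) (fun x => D (t * x))
      (fun x => E (t * x)) (fun x => G (t * x)) = edgeSum A B C D E G := by
  have h (f : F → ℂ) : ∑ x, f x = ∑ x, f (t * x) :=
    (Equiv.sum_comp (Equiv.mulLeft₀ t ht) f).symm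
  simp only [edgeSum, mul_sub]
  symm
  rw [h]; refine sum_congr rfl fun x _ => ?_
  rw [h]; refine sum_congr rfl fun y _ => ?_
  rw [h]; refine sum_congr rfl fun z _ => ?_
  rw [h]

lemma edgeSum_eq_zero {t : F} (ht : t ≠ 0) {A B C D E G : F → ℂ} {a b c d e g : ℂ}
    (hA : ∀ x, A (t * x) = a * A x) (hB : ∀ x, B (t * x) = b * B x)
    (hC : ∀ x, C (t * x) = c * C x) (hD : ∀ x, D (t * x) = d * D x)
    (hE : ∀ x, E (t * x) = e * E x) (hG : ∀ x, G (t * x) = g * G x)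
    (h : a * b * c * d * e * g ≠ 1) : edgeSum A B C D E G = 0 := by
  have key := edgeSum_scale ht A B C D E G
  simp only [hA, hB, hC, hD, hE, hG, edgeSum_const_mul] at key
  by_contra h0
  exact h ((mul_eq_right₀ h0).mp key)

lemma edgeSum_eq_card_mul {D E G : F → ℂ} (hD : D.Even) (hE : E.Even) (hG : G.Even)
    (A B C : F → ℂ) :
    edgeSum A B C D E G = Fintype.card F *
      ∑ y, ∑ z, ∑ w, A y * B z * C w * D (y - z) * E (y - w) * G (z - w) := by
  have h (x : F) : ∑ y, ∑ z, ∑ w, A (x - y) * B (x - z) * C (x - w) * D (y - z) * E (y - w) *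
      G (z - w) = ∑ y, ∑ z, ∑ w, A y * B z * C w * D (y - z) * E (y - w) * G (z - w) := by
    symm
    rw [← sum_comp_sub _ x]; refine sum_congr rfl fun y _ => ?_
    rw [← sum_comp_sub _ x]; refine sum_congr rfl fun z _ => ?_
    rw [← sum_comp_sub _ x]; refine sum_congr rfl fun w _ => ?_
    rw [← hD (y - z), ← hE (y - w), ← hG (z - w)]
    simp only [sub_sub_sub_cancel_left, neg_sub]
  simp [edgeSum, h]

lemma edgeSum_eq_normalizedSum {A B C D E G : MulChar F ℂ} (hD : D (-1) = 1) (hE : E (-1) = 1)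
    (hG : G (-1) = 1) (h : A * B * C * D * E * G = 1) :
    edgeSum A B C D E G = Fintype.card F * (Fintype.card F - 1) * normalizedSum B C D E G := by
  classical
  rw [edgeSum_eq_card_mul (MulChar.even_of_neg_one hD) (MulChar.even_of_neg_one hE)
    (MulChar.even_of_neg_one hG), mul_assoc]
  congr 1
  rw [← sum_nonzeroInd, sum_mul]
  refine sum_congr rfl fun y _ => ?_
  by_cases hy : y = 0
  · simp [hy, nonzeroInd, MulChar.map_zero]
  have hsum (f : F → ℂ) : ∑ x, f x = ∑ x, f (y * x) :=
    (Equiv.sum_comp (Equiv.mulLeft₀ y hy) f).symm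
  have hprod : A y * B y * C y * D y * E y * G y = 1 := by
    simp only [← MulChar.mul_apply, h]
    exact MulChar.one_apply (isUnit_iff_ne_zero.mpr hy)
  rw [nonzeroInd, if_neg hy, one_mul, normalizedSum, hsum]
  refine sum_congr rfl fun b _ => ?_
  rw [hsum]
  refine sum_congr rfl fun c _ => ?_
  rw [← mul_sub, ← mul_one_sub, ← mul_one_sub]
  simp only [map_mul]
  linear_combination (B b * C c * D (1 - b) * E (1 - c) * G (b - c)) * hprod

/-- Inversion about one vertex of `K₄`. -/
lemma edgeSum_inversion {A B C D E G : MulChar F ℂ} (hD : D (-1) = 1) (hE : E (-1) = 1)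
    (hG : G (-1) = 1) :
    edgeSum A B C D E G = edgeSum ((A * D * E)⁻¹ : MulChar F ℂ) ((B * D * G)⁻¹ : MulChar F ℂ)
      ((C * E * G)⁻¹ : MulChar F ℂ) D E G := by
  have hD' := MulChar.even_of_neg_one hD
  have hE' := MulChar.even_of_neg_one hE
  have hG' := MulChar.even_of_neg_one hG
  rw [edgeSum_eq_card_mul hD' hE' hG', edgeSum_eq_card_mul hD' hE' hG']
  congr 1
  have hsum (f : F → ℂ) : ∑ x, f x = ∑ x, f x⁻¹ :=
    (Equiv.sum_comp (Equiv.inv F) f).symm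
  rw [hsum]; refine sum_congr rfl fun y _ => ?_
  rw [hsum]; refine sum_congr rfl fun z _ => ?_
  rw [hsum]; refine sum_congr rfl fun w _ => ?_
  by_cases hy : y = 0
  · simp [hy, MulChar.map_zero]
  by_cases hz : z = 0
  · simp [hz, MulChar.map_zero]
  by_cases hw : w = 0
  · simp [hw, MulChar.map_zero]
  rw [MulChar.apply_inv_sub_inv hD hy hz, MulChar.apply_inv_sub_inv hE hy hw,
    MulChar.apply_inv_sub_inv hG hz hw]
  simp only [mul_inv, MulChar.mul_apply, ← MulChar.inv_apply']
  ring

lemma sum_mul_apply_sub (A B : MulChar F ℂ) {d : F} (hd : d ≠ 0) :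
    ∑ t, A t * B (d - t) = A d * B d * jacobiSum A B := by
  rw [jacobiSum, mul_sum, ← Equiv.sum_comp (Equiv.mulLeft₀ d hd)]
  refine sum_congr rfl fun t _ => ?_
  change A (d * t) * B (d - d * t) = _
  rw [← mul_one_sub, map_mul, map_mul]
  ring

lemma star_edgeSum (A B C D E G : MulChar F ℂ) :
    star (edgeSum A B C D E G) = edgeSum (A⁻¹ : MulChar F ℂ) (B⁻¹ : MulChar F ℂ)
      (C⁻¹ : MulChar F ℂ) (D⁻¹ : MulChar F ℂ) (E⁻¹ : MulChar F ℂ) (G⁻¹ : MulChar F ℂ) := by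
  simp only [edgeSum, star_sum, star_mul', MulChar.star_apply']

lemma star_jacobiSum (A B : MulChar F ℂ) :
    star (jacobiSum A B) = jacobiSum A⁻¹ B⁻¹ := by
  simp only [jacobiSum, star_sum, star_mul', MulChar.star_apply']

end CharacterSums

section QuarticCharacter

variable {F : Type*} [Field F]

/-- The `±1`-valued combination of a quartic character and its inverse, where `ω ^ 2 = -1`. -/
noncomputable def quarticSign (ψ : MulChar F ℂ) (ω : ℂ) (x : F) : ℂ :=
  (1 - ω) / 2 * ψ x + (1 + ω) / 2 * ψ⁻¹ x

variable {ψ : MulChar F ℂ} {ω : ℂ}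

lemma MulChar.inv_eq_cube (h4 : ψ ^ 4 = 1) : ψ⁻¹ = ψ ^ 3 :=
  inv_eq_of_mul_eq_one_right (by rw [← h4, pow_succ' _ 3])

lemma exists_sq_eq_neg_one (h4 : ψ ^ 4 = 1) (h2 : ψ ^ 2 ≠ 1) :
    ∃ t : F, t ≠ 0 ∧ ψ t ^ 2 = -1 := by
  obtain ⟨t, ht⟩ := MulChar.ne_one_iff.mp h2
  have h : ψ t ^ 4 = 1 := by
    rw [← MulChar.pow_apply_coe, h4, MulChar.one_apply_coe]
  rw [MulChar.pow_apply_coe] at ht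
  refine ⟨t, t.ne_zero, ?_⟩
  have : (ψ t ^ 2 - 1) * (ψ t ^ 2 + 1) = 0 := by linear_combination h
  rcases mul_eq_zero.mp this with h' | h'
  · exact absurd (sub_eq_zero.mp h') ht
  · exact eq_neg_of_add_eq_zero_left h'

lemma apply_mul_inv_apply [DecidableEq F] (χ : MulChar F ℂ) (x : F) :
    χ x * χ⁻¹ x = nonzeroInd x := by
  by_cases hx : x = 0
  · simp [hx, nonzeroInd, MulChar.map_zero]
  · rw [← MulChar.mul_apply, mul_inv_cancel, nonzeroInd, if_neg hx,
      MulChar.one_apply (isUnit_iff_ne_zero.mpr hx)]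

lemma inv_apply_sq (h4 : ψ ^ 4 = 1) (x : F) : ψ⁻¹ x ^ 2 = ψ x ^ 2 := by
  rw [MulChar.inv_eq_cube h4]
  by_cases hx : x = 0
  · simp [hx, MulChar.map_zero]
  have h : ψ x ^ 4 = 1 := by
    rw [← MulChar.pow_apply' _ (by norm_num), h4, MulChar.one_apply (isUnit_iff_ne_zero.mpr hx)]
  rw [MulChar.pow_apply' _ (by norm_num)]
  linear_combination ψ x ^ 2 * h

lemma quarticSign_mul_self [DecidableEq F] (h4 : ψ ^ 4 = 1) (hω : ω ^ 2 = -1) (x : F) :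
    quarticSign ψ ω x * quarticSign ψ ω x = nonzeroInd x := by
  rw [← apply_mul_inv_apply ψ, quarticSign]
  linear_combination (1 + ω) ^ 2 / 4 * inv_apply_sq h4 x +
    (ψ x ^ 2 / 2 - ψ x * ψ⁻¹ x / 2) * hω

lemma quarticSign_even (hneg : ψ (-1) = 1) : (quarticSign ψ ω).Even := fun x => by
  have h : ψ⁻¹ (-1) = 1 := by rw [MulChar.inv_apply', inv_neg_one, hneg]
  rw [quarticSign, quarticSign, MulChar.even_of_neg_one hneg, MulChar.even_of_neg_one h]

variable [Fintype F]

lemma sum_quarticSign (h1 : ψ ≠ 1) : ∑ x, quarticSign ψ ω x = 0 := by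
  simp only [quarticSign, sum_add_distrib, ← mul_sum]
  rw [MulChar.sum_eq_zero_of_ne_one h1, MulChar.sum_eq_zero_of_ne_one (inv_ne_one.mpr h1)]
  ring

lemma sum_quarticSign_convolution (h4 : ψ ^ 4 = 1) (h1 : ψ ≠ 1) (hneg : ψ (-1) = 1)
    (hω : ω ^ 2 = -1) {d : F} (hd : d ≠ 0) :
    ∑ t, quarticSign ψ ω t * quarticSign ψ ω (d - t) =
      -1 - ω * Complex.I * (jacobiSum ψ ψ).im * (ψ ^ 2) d := by
  classical
  have hneg' : ψ⁻¹ (-1) = 1 := by rw [MulChar.inv_apply', inv_neg_one, hneg]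
  have hJ : jacobiSum ψ ψ - jacobiSum ψ⁻¹ ψ⁻¹ = 2 * Complex.I * (jacobiSum ψ ψ).im := by
    rw [← star_jacobiSum]
    apply Complex.ext <;> simp [← two_mul]
  have e1 : jacobiSum ψ ψ⁻¹ = -1 := by rw [jacobiSum_nontrivial_inv h1, hneg]
  have e2 : jacobiSum ψ⁻¹ ψ = -1 := by rw [jacobiSum_comm, e1]
  have h0 : ψ d * ψ⁻¹ d = 1 := by rw [apply_mul_inv_apply, nonzeroInd, if_neg hd]
  calc _ = ((1 - ω) / 2) ^ 2 * ∑ t, ψ t * ψ (d - t) + ((1 + ω) / 2) ^ 2 * ∑ t, ψ⁻¹ t * ψ⁻¹ (d - t)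
        + (1 - ω ^ 2) / 4 * (∑ t, ψ t * ψ⁻¹ (d - t) + ∑ t, ψ⁻¹ t * ψ (d - t)) := by
        simp only [mul_sum, ← sum_add_distrib, quarticSign]
        exact sum_congr rfl fun t _ => by ring
    _ = _ := by
        rw [sum_mul_apply_sub _ _ hd, sum_mul_apply_sub _ _ hd, sum_mul_apply_sub _ _ hd,
          sum_mul_apply_sub _ _ hd, e1, e2, MulChar.pow_apply' _ two_ne_zero]
        linear_combination ((1 + ω) / 2) ^ 2 * jacobiSum ψ⁻¹ ψ⁻¹ * inv_apply_sq h4 d -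
          (1 - ω ^ 2) / 2 * h0 - ω / 2 * ψ d ^ 2 * hJ +
          (ψ d ^ 2 * (jacobiSum ψ ψ + jacobiSum ψ⁻¹ ψ⁻¹) / 4 + 1 / 2) * hω

lemma edgeSum_quarticSign_fourCycle [DecidableEq F] (h4 : ψ ^ 4 = 1) (h2 : ψ ^ 2 ≠ 1)
    (hneg : ψ (-1) = 1) (hω : ω ^ 2 = -1) :
    edgeSum nonzeroInd (quarticSign ψ ω) (quarticSign ψ ω) (quarticSign ψ ω) (quarticSign ψ ω)
      nonzeroInd =
      Fintype.card F * (Fintype.card F - 1) * (3 - Fintype.card F + (jacobiSum ψ ψ).im ^ 2) := by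
  have h1 : ψ ≠ 1 := by rintro rfl; simp at h2
  rw [edgeSum_fourCycle (quarticSign_even hneg) (quarticSign_mul_self h4 hω)]
  have h (d : F) : nonzeroInd d * (∑ t, quarticSign ψ ω t * quarticSign ψ ω (d - t)) ^ 2 =
      (1 + (jacobiSum ψ ψ).im ^ 2) * nonzeroInd d +
        2 * ω * Complex.I * (jacobiSum ψ ψ).im * (ψ ^ 2) d := by
    by_cases hd : d = 0
    · simp [hd, nonzeroInd, MulChar.map_zero]
    have hsq : (ψ ^ 2) d ^ 2 = 1 := by
      rw [← MulChar.pow_apply' _ two_ne_zero, ← pow_mul, h4,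
        MulChar.one_apply (isUnit_iff_ne_zero.mpr hd)]
    rw [sum_quarticSign_convolution h4 h1 hneg hω hd, nonzeroInd, if_neg hd]
    linear_combination ((jacobiSum ψ ψ).im : ℂ) ^ 2 * ω ^ 2 * Complex.I ^ 2 * hsq +
      ((jacobiSum ψ ψ).im : ℂ) ^ 2 * ω ^ 2 * Complex.I_sq - ((jacobiSum ψ ψ).im : ℂ) ^ 2 * hω
  simp only [h, sum_add_distrib, ← mul_sum, sum_nonzeroInd, MulChar.sum_eq_zero_of_ne_one h2]
  ring

/-- The contribution of the subgraphs of `K₄` to the quadruple sum, all six edges carrying a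
quartic sign. -/
lemma edgeSum_quarticSign (h4 : ψ ^ 4 = 1) (h2 : ψ ^ 2 ≠ 1) (hneg : ψ (-1) = 1)
    (hω : ω ^ 2 = -1) :
    edgeSum (quarticSign ψ ω) (quarticSign ψ ω) (quarticSign ψ ω) (quarticSign ψ ω)
      (quarticSign ψ ω) (quarticSign ψ ω) =
      Fintype.card F * (Fintype.card F - 1) / 2 *
        (3 * normalizedSum ψ ψ ψ ⇑ψ⁻¹ ⇑ψ⁻¹ -
          (normalizedSum ⇑ψ⁻¹ ψ ⇑ψ⁻¹ ⇑ψ⁻¹ ⇑ψ⁻¹).re) := by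
  obtain ⟨t, ht, hψt⟩ := exists_sq_eq_neg_one h4 h2
  have hneg' : ψ⁻¹ (-1) = 1 := by rw [MulChar.inv_apply', inv_neg_one, hneg]
  have hX := MulChar.even_of_neg_one hneg
  have hY := MulChar.even_of_neg_one hneg'
  have hinv : ψ⁻¹ t = -ψ t := by
    classical
    have h0 : ψ t ≠ 0 := by rintro h; simp [h] at hψt
    have := apply_mul_inv_apply ψ t
    rw [nonzeroInd, if_neg ht] at this
    apply mul_left_cancel₀ h0
    linear_combination this + hψt
  have hXt (x : F) : ψ (t * x) = ψ t * ψ x := map_mul _ _ _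
  have hYt (x : F) : ψ⁻¹ (t * x) = -ψ t * ψ⁻¹ x := by rw [map_mul, hinv]
  have hp4 : ψ t ^ 4 = 1 := by linear_combination (ψ t ^ 2 - 1) * hψt
  have hfun : quarticSign ψ ω =
      (fun x => (1 - ω) / 2 * ψ x) + fun x => (1 + ω) / 2 * ψ⁻¹ x := rfl
  rw [hfun, edgeSum_add (fun x => by rw [hX]) (fun x => by rw [hY])]
  simp only [edgeSum_const_mul]
  have ne : (-1 : ℂ) ≠ 1 := by norm_num
  have z0 : edgeSum ψ ψ ψ ψ ψ ψ = 0 := edgeSum_eq_zero ht hXt hXt hXt hXt hXt hXt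
    (by convert ne using 1; linear_combination ψ t ^ 2 * hp4 + hψt)
  have z2 : edgeSum ⇑ψ⁻¹ ⇑ψ⁻¹ ψ ψ ψ ψ = 0 := edgeSum_eq_zero ht hYt hYt hXt hXt hXt hXt
    (by convert ne using 1; linear_combination ψ t ^ 2 * hp4 + hψt)
  have z2' : edgeSum ψ ψ ⇑ψ⁻¹ ⇑ψ⁻¹ ψ ψ = 0 := edgeSum_eq_zero ht hXt hXt hYt hYt hXt hXt
    (by convert ne using 1; linear_combination ψ t ^ 2 * hp4 + hψt)
  have z4 : edgeSum ψ ⇑ψ⁻¹ ⇑ψ⁻¹ ⇑ψ⁻¹ ⇑ψ⁻¹ ψ = 0 := edgeSum_eq_zero ht hXt hYt hYt hYt hYt hXt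
    (by convert ne using 1; linear_combination ψ t ^ 2 * hp4 + hψt)
  have z4' : edgeSum ⇑ψ⁻¹ ⇑ψ⁻¹ ⇑ψ⁻¹ ⇑ψ⁻¹ ψ ψ = 0 := edgeSum_eq_zero ht hYt hYt hYt hYt hXt hXt
    (by convert ne using 1; linear_combination ψ t ^ 2 * hp4 + hψt)
  have z6 : edgeSum ⇑ψ⁻¹ ⇑ψ⁻¹ ⇑ψ⁻¹ ⇑ψ⁻¹ ⇑ψ⁻¹ ⇑ψ⁻¹ = 0 :=
    edgeSum_eq_zero ht hYt hYt hYt hYt hYt hYt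
    (by convert ne using 1; linear_combination ψ t ^ 2 * hp4 + hψt)
  have path : edgeSum ⇑ψ⁻¹ ψ ψ ψ ⇑ψ⁻¹ ⇑ψ⁻¹ = Fintype.card F * (Fintype.card F - 1) *
      normalizedSum ψ ψ ψ ⇑ψ⁻¹ ⇑ψ⁻¹ :=
    edgeSum_eq_normalizedSum hneg hneg' hneg' (by group)
  have five : edgeSum ⇑ψ⁻¹ ⇑ψ⁻¹ ψ ⇑ψ⁻¹ ⇑ψ⁻¹ ⇑ψ⁻¹ = Fintype.card F * (Fintype.card F - 1) *
      normalizedSum ⇑ψ⁻¹ ψ ⇑ψ⁻¹ ⇑ψ⁻¹ ⇑ψ⁻¹ := by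
    refine edgeSum_eq_normalizedSum hneg' hneg' hneg' ?_
    rw [MulChar.inv_eq_cube h4]
    calc _ = (ψ ^ 4) ^ 4 := by simp only [← pow_succ, ← pow_add, ← pow_mul]
      _ = 1 := by rw [h4, one_pow]
  have star_tri : edgeSum ψ ψ ⇑ψ⁻¹ ψ ⇑ψ⁻¹ ⇑ψ⁻¹ = edgeSum ⇑ψ⁻¹ ⇑ψ⁻¹ ψ ⇑ψ⁻¹ ⇑ψ⁻¹ ⇑ψ⁻¹ := by
    have e1 : (ψ * ψ * ψ⁻¹)⁻¹ = ψ⁻¹ := by group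
    have e2 : (ψ⁻¹ * ψ⁻¹ * ψ⁻¹)⁻¹ = ψ⁻¹ := by
      calc (ψ⁻¹ * ψ⁻¹ * ψ⁻¹)⁻¹ = ψ ^ 3 := by group
        _ = ψ⁻¹ := (MulChar.inv_eq_cube h4).symm
    rw [edgeSum_inversion hneg hneg' hneg', e1, e2, edgeSum_swap_last hY, edgeSum_swap_fst hY]
  have conj_five : edgeSum ψ ψ ⇑ψ⁻¹ ψ ψ ψ =
      star (edgeSum ⇑ψ⁻¹ ⇑ψ⁻¹ ψ ⇑ψ⁻¹ ⇑ψ⁻¹ ⇑ψ⁻¹) := by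
    rw [star_edgeSum, inv_inv]
  have conj_star : edgeSum ⇑ψ⁻¹ ⇑ψ⁻¹ ψ ⇑ψ⁻¹ ψ ψ = star (edgeSum ψ ψ ⇑ψ⁻¹ ψ ⇑ψ⁻¹ ⇑ψ⁻¹) := by
    rw [star_edgeSum, inv_inv]
  have hre : (normalizedSum ⇑ψ⁻¹ ψ ⇑ψ⁻¹ ⇑ψ⁻¹ ⇑ψ⁻¹) +
      star (normalizedSum ⇑ψ⁻¹ ψ ⇑ψ⁻¹ ⇑ψ⁻¹ ⇑ψ⁻¹) =
      2 * (normalizedSum ⇑ψ⁻¹ ψ ⇑ψ⁻¹ ⇑ψ⁻¹ ⇑ψ⁻¹).re := by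
    simpa using Complex.add_conj (normalizedSum ⇑ψ⁻¹ ψ ⇑ψ⁻¹ ⇑ψ⁻¹ ⇑ψ⁻¹)
  rw [conj_star, star_tri, conj_five, five, path, z0, z2, z2', z4, z4', z6]
  simp only [star_mul', star_sub, star_natCast, star_one]
  set V := normalizedSum ⇑ψ⁻¹ ψ ⇑ψ⁻¹ ⇑ψ⁻¹ ⇑ψ⁻¹
  set n : ℂ := (Fintype.card F : ℂ)
  have ha : ((1 - ω) / 2) * ((1 + ω) / 2) = 1 / 2 := by linear_combination -hω / 4
  have ha2 : ((1 - ω) / 2) ^ 2 = -ω / 2 := by linear_combination hω / 4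
  have hb2 : ((1 + ω) / 2) ^ 2 = ω / 2 := by linear_combination hω / 4
  have ha4 : ((1 - ω) / 2) ^ 4 = -1 / 4 := by
    linear_combination (((1 - ω) / 2) ^ 2 - ω / 2) * ha2 + hω / 4
  have hb4 : ((1 + ω) / 2) ^ 4 = -1 / 4 := by
    linear_combination (((1 + ω) / 2) ^ 2 + ω / 2) * hb2 + hω / 4
  generalize (1 - ω) / 2 = a at *
  generalize (1 + ω) / 2 = b at *
  have c3 : a ^ 3 * b ^ 3 = 1 / 8 := by rw [← mul_pow, ha]; norm_num
  have c5 : a ^ 5 * b = -1 / 8 := by linear_combination a * b * ha4 - ha / 4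
  have c1 : a * b ^ 5 = -1 / 8 := by linear_combination a * b * hb4 - ha / 4
  linear_combination 6 * n * (n - 1) * star V * c5 + 6 * n * (n - 1) * V * c1 +
    n * (n - 1) * (4 * V + 4 * star V + 12 * normalizedSum ψ ψ ψ ⇑ψ⁻¹ ⇑ψ⁻¹) * c3
    - n * (n - 1) / 4 * hre

lemma sq_apply_eq_quadraticChar [DecidableEq F] (h4 : ψ ^ 4 = 1) (h2 : ψ ^ 2 ≠ 1) (x : F) :
    ψ x ^ 2 = (quadraticChar F x : ℂ) := by
  obtain ⟨t, ht, hψt⟩ := exists_sq_eq_neg_one h4 h2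
  have of_isSquare {y : F} (hy : y ≠ 0) (h : IsSquare y) : ψ y ^ 2 = 1 := by
    obtain ⟨r, rfl⟩ := h
    have hr : r ≠ 0 := fun h => hy (by simp [h])
    rw [map_mul, ← sq, ← pow_mul, ← MulChar.pow_apply' _ (by norm_num), h4,
      MulChar.one_apply (isUnit_iff_ne_zero.mpr hr)]
  by_cases hx : x = 0
  · simp [hx, MulChar.map_zero]
  by_cases hsq : IsSquare x
  · rw [of_isSquare hx hsq, (quadraticChar_one_iff_isSquare hx).mpr hsq, Int.cast_one]
  · have htsq : ¬IsSquare t := fun h => by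
      have := of_isSquare ht h
      rw [hψt] at this
      norm_num at this
    have hq : quadraticChar F (x * t) = 1 := by
      rw [map_mul, quadraticChar_neg_one_iff_not_isSquare.mpr hsq,
        quadraticChar_neg_one_iff_not_isSquare.mpr htsq]
      rfl
    have h := of_isSquare (mul_ne_zero hx ht)
      ((quadraticChar_one_iff_isSquare (mul_ne_zero hx ht)).mp hq)
    rw [map_mul, mul_pow, hψt] at h
    rw [quadraticChar_neg_one_iff_not_isSquare.mpr hsq]
    push_cast
    linear_combination -h

lemma sum_comp_sq (h4 : ψ ^ 4 = 1) (h2 : ψ ^ 2 ≠ 1) (hF : ringChar F ≠ 2) (f : F → ℂ) :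
    ∑ x, f (x ^ 2) = ∑ t, (1 + ψ t ^ 2) * f t := by
  classical
  rw [← sum_fiberwise_of_maps_to (g := fun x : F => x ^ 2) (t := univ) (fun _ _ => mem_univ _)]
  refine sum_congr rfl fun t _ => ?_
  have hcard := quadraticChar_card_sqrts hF t
  rw [sum_congr rfl (g := fun _ => f t) fun x hx => by rw [(mem_filter.mp hx).2], sum_const,
    nsmul_eq_mul, sq_apply_eq_quadraticChar h4 h2]
  congr 1
  rw [Set.toFinset_ofPred] at hcard
  rw [add_comm]
  exact_mod_cast hcard

lemma jacobiSum_self_eq_jacobiSum_sq (h4 : ψ ^ 4 = 1) (h2 : ψ ^ 2 ≠ 1) (hF : ringChar F ≠ 2)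
    (hfour : ψ 4 = 1) : jacobiSum ψ ψ = jacobiSum ψ (ψ ^ 2) := by
  have h1 : ψ ≠ 1 := by rintro rfl; simp at h2
  have two : (2 : F) ≠ 0 := Ring.two_ne_zero hF
  calc jacobiSum ψ ψ = ∑ x : F, ψ (1 - (1 - 2 * x) ^ 2) := by
        refine sum_congr rfl fun x _ => ?_
        rw [← map_mul, ← one_mul (ψ _), ← hfour, ← map_mul]
        congr 1; ring
    _ = ∑ y : F, ψ (1 - y ^ 2) := by
        rw [← sum_comp_sub (fun y => ψ (1 - y ^ 2)) 1]
        exact Equiv.sum_comp (Equiv.mulLeft₀ (2 : F) two) fun x => ψ (1 - (1 - x) ^ 2)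
    _ = ∑ t : F, ψ (1 - t) + ∑ t : F, (ψ ^ 2) t * ψ (1 - t) := by
        rw [sum_comp_sq h4 h2 hF fun y => ψ (1 - y), ← sum_add_distrib]
        refine sum_congr rfl fun t _ => ?_
        rw [MulChar.pow_apply' _ two_ne_zero]; ring
    _ = jacobiSum ψ (ψ ^ 2) := by
        rw [sum_comp_sub (fun t => ψ t) 1, MulChar.sum_eq_zero_of_ne_one h1, zero_add,
          jacobiSum_comm, jacobiSum]

/-- The quadruple sum with all six edges weighted by twice the indicator of the connection set. -/
lemma edgeSum_nonzeroInd_add_quarticSign [DecidableEq F] (h4 : ψ ^ 4 = 1) (h2 : ψ ^ 2 ≠ 1)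
    (hneg : ψ (-1) = 1) (hω : ω ^ 2 = -1) {f : F → ℂ} (hf : f = nonzeroInd + quarticSign ψ ω) :
    edgeSum f f f f f f = Fintype.card F * (Fintype.card F - 1) / 2 *
      (2 * (Fintype.card F ^ 2 - 20 * Fintype.card F + 81) + 6 * (jacobiSum ψ ψ).im ^ 2 -
        (normalizedSum ⇑ψ⁻¹ ψ ⇑ψ⁻¹ ⇑ψ⁻¹ ⇑ψ⁻¹).re + 3 * normalizedSum ψ ψ ψ ⇑ψ⁻¹ ⇑ψ⁻¹) := by
  have h1 : ψ ≠ 1 := by rintro rfl; simp at h2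
  obtain ⟨t, ht, hψt⟩ := exists_sq_eq_neg_one h4 h2
  have heven := quarticSign_even (ω := ω) hneg
  have hs := quarticSign_mul_self h4 hω
  have hsum := sum_quarticSign (ω := ω) h1
  have ht2 : t ^ 2 ≠ 0 := pow_ne_zero 2 ht
  have hX (x : F) : (nonzeroInd (t ^ 2 * x) : ℂ) = 1 * nonzeroInd x := by
    simp [nonzeroInd, ht]
  have hY (x : F) : quarticSign ψ ω (t ^ 2 * x) = -1 * quarticSign ψ ω x := by
    simp only [quarticSign, map_mul, map_pow, inv_apply_sq h4, hψt]
    ring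
  have odd1 : edgeSum nonzeroInd nonzeroInd (quarticSign ψ ω) nonzeroInd nonzeroInd nonzeroInd =
      0 := edgeSum_eq_zero ht2 hX hX hY hX hX hX (by norm_num)
  have odd3 : edgeSum nonzeroInd nonzeroInd (quarticSign ψ ω) nonzeroInd (quarticSign ψ ω)
      (quarticSign ψ ω) = 0 := edgeSum_eq_zero ht2 hX hX hY hX hY hY (by norm_num)
  have odd3' : edgeSum (quarticSign ψ ω) (quarticSign ψ ω) nonzeroInd (quarticSign ψ ω)
      nonzeroInd nonzeroInd = 0 := edgeSum_eq_zero ht2 hY hY hX hY hX hX (by norm_num)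
  have odd3'' : edgeSum (quarticSign ψ ω) nonzeroInd nonzeroInd nonzeroInd (quarticSign ψ ω)
      (quarticSign ψ ω) = 0 := edgeSum_eq_zero ht2 hY hX hX hX hY hY (by norm_num)
  have odd5 : edgeSum (quarticSign ψ ω) (quarticSign ψ ω) nonzeroInd (quarticSign ψ ω)
      (quarticSign ψ ω) (quarticSign ψ ω) = 0 :=
    edgeSum_eq_zero ht2 hY hY hX hY hY hY (by norm_num)
  rw [hf, edgeSum_add nonzeroInd_even heven, odd1, odd3, odd3', odd3'', odd5, edgeSum_nonzeroInd,
    edgeSum_adjacent hs hsum, edgeSum_opposite heven hs hsum,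
    edgeSum_quarticSign_fourCycle h4 h2 hneg hω, edgeSum_paw heven hs hsum,
    edgeSum_quarticSign h4 h2 hneg hω]
  ring

end QuarticCharacter

section Hypergeometric

variable {q : ℕ}

lemma conjChar_eq_inv (A : DirichletCharacter ℂ q) : conjChar A = A⁻¹ := by
  rw [← MulChar.star_eq_inv]; rfl

variable [NeZero q]

lemma sum_apply_mul_inv_apply (a b : ZMod q) :
    ∑ χ : DirichletCharacter ℂ q, χ a * χ⁻¹ b =
      open Classical in if IsUnit b ∧ a = b then (Nat.totient q : ℂ) else 0 := by
  by_cases hb : IsUnit b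
  · rw [← sum_congr rfl fun χ _ => mul_comm (χ⁻¹ b) (χ a)]
    have h (χ : DirichletCharacter ℂ q) : χ⁻¹ b = χ b⁻¹ := by
      obtain ⟨u, rfl⟩ := hb
      rw [MulChar.inv_apply, Ring.inverse_unit, ZMod.inv_coe_unit]
    simp only [h, DirichletCharacter.sum_char_inv_mul_char_eq ℂ hb, hb, true_and, eq_comm]
  · simp [hb, MulChar.map_nonunit]

/-- The solution of the multiplicative constraint produced by orthogonality of characters. -/
lemma sum_apply_constraint (A : DirichletCharacter ℂ q) {y z : ZMod q} (hy : IsUnit y)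
    (hz : IsUnit z) (hy1 : IsUnit (1 - y)) (hz1 : IsUnit (1 - z)) :
    (∑ x, A x * open Classical in
      if IsUnit ((1 - x) * (1 - y) * (1 - z)) ∧ -(x * y * z) = (1 - x) * (1 - y) * (1 - z)
        then (1 : ℂ) else 0) = A (-1) * A (1 - y) * A (1 - z) * A⁻¹ (y + z - 1) := by
  classical
  by_cases hn : IsUnit (y + z - 1)
  · obtain ⟨n, hn⟩ := hn
    have key (x : ZMod q) : (IsUnit ((1 - x) * (1 - y) * (1 - z)) ∧
        -(x * y * z) = (1 - x) * (1 - y) * (1 - z)) ↔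
        x = -((1 - y) * (1 - z)) * ((n⁻¹ : (ZMod q)ˣ) : ZMod q) := by
      have hinv : (n : ZMod q) * ((n⁻¹ : (ZMod q)ˣ) : ZMod q) = 1 := n.mul_inv
      constructor
      · rintro ⟨-, h⟩
        linear_combination -((n⁻¹ : (ZMod q)ˣ) : ZMod q) * h - x * hinv + x * ((n⁻¹ : (ZMod q)ˣ) : ZMod q) * hn
      · intro h
        have hxn : x * (y + z - 1) = -((1 - y) * (1 - z)) := by
          rw [h, ← hn]; linear_combination -((1 - y) * (1 - z)) * hinv
        have heq : -(x * y * z) = (1 - x) * (1 - y) * (1 - z) := by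
          linear_combination -hxn
        refine ⟨?_, heq⟩
        rw [← heq]
        have hx : IsUnit x := by
          rw [h]; exact ((hy1.mul hz1).neg).mul n⁻¹.isUnit
        exact ((hx.mul hy).mul hz).neg
    simp only [key, mul_ite, mul_one, mul_zero, sum_ite_eq', mem_univ, if_true]
    rw [← neg_one_mul, map_mul, map_mul, map_mul, ← hn, MulChar.inv_apply, Ring.inverse_unit]
    ring
  · rw [MulChar.map_nonunit _ hn, mul_zero]
    refine sum_eq_zero fun x _ => ?_
    rw [mul_ite, mul_one, mul_zero, ite_eq_right_iff]
    rintro ⟨-, h⟩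
    apply MulChar.map_nonunit
    intro hx
    apply hn
    have hxn : x * (y + z - 1) = -((1 - y) * (1 - z)) := by linear_combination -h
    exact isUnit_of_mul_isUnit_right (hxn ▸ (hy1.mul hz1).neg)

lemma sq_mul_threeF₂_one (A B C D E : DirichletCharacter ℂ q) (hA : A (-1) = 1)
    (hD : D (-1) = 1) (hE : E (-1) = 1) :
    (q : ℂ) ^ 2 * threeF₂ A B C D E 1 =
      normalizedSum B ⇑(A * E⁻¹) ⇑(A * D⁻¹) C ⇑A⁻¹ := by
  classical
  have hq : (q : ℂ) ≠ 0 := NeZero.ne _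
  have htot : (Nat.totient q : ℂ) ≠ 0 :=
    Nat.cast_ne_zero.mpr (Nat.totient_pos.mpr (NeZero.pos q)).ne'
  have hterm (χ : DirichletCharacter ℂ q) :
      dBinom (A * χ) χ * dBinom (B * χ) (D * χ) * dBinom (C * χ) (E * χ) * χ 1 =
      (1 / (q : ℂ) ^ 3) * ∑ y, ∑ z, ∑ x, (B y * D⁻¹ (1 - y) * (C z * E⁻¹ (1 - z))) * (A x *
        (χ (-(x * y * z)) * χ⁻¹ ((1 - x) * (1 - y) * (1 - z)))) := by
    have hχ : χ (-1) * χ (-1) = 1 := by rw [← map_mul]; simp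
    simp only [dBinom, conjChar_eq_inv, map_one, mul_one, MulChar.mul_apply, hD, hE, one_mul]
    have hJ : (∑ y, ∑ z, ∑ x, (B y * D⁻¹ (1 - y) * (C z * E⁻¹ (1 - z))) * (A x *
        (χ (-(x * y * z)) * χ⁻¹ ((1 - x) * (1 - y) * (1 - z))))) =
        χ (-1) * (jacobiSum (B * χ) (D * χ)⁻¹ * (jacobiSum (C * χ) (E * χ)⁻¹ *
          jacobiSum (A * χ) χ⁻¹)) := by
      rw [jacobiSum, jacobiSum, jacobiSum, sum_mul, mul_sum]
      refine sum_congr rfl fun y _ => ?_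
      rw [sum_mul, mul_sum, mul_sum]
      refine sum_congr rfl fun z _ => ?_
      rw [mul_sum, mul_sum, mul_sum]
      refine sum_congr rfl fun x _ => ?_
      rw [← neg_one_mul]
      simp only [map_mul, MulChar.mul_apply, mul_inv]
      ring
    rw [hJ]
    field_simp
    linear_combination χ (-1) * jacobiSum (B * χ) (D * χ)⁻¹ * jacobiSum (C * χ) (E * χ)⁻¹ *
          jacobiSum (A * χ) χ⁻¹ * hχ
  have hsum : ∑ χ : DirichletCharacter ℂ q,
      dBinom (A * χ) χ * dBinom (B * χ) (D * χ) * dBinom (C * χ) (E * χ) * χ 1 =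
      (1 / (q : ℂ) ^ 3) * (Nat.totient q * ∑ y, ∑ z, (B y * D⁻¹ (1 - y) * (C z * E⁻¹ (1 - z))) *
        (A (1 - y) * A (1 - z) * A⁻¹ (y + z - 1))) := by
    simp only [hterm, ← mul_sum]
    congr 1
    rw [sum_comm, mul_sum]
    refine sum_congr rfl fun y _ => ?_
    rw [sum_comm, mul_sum]
    refine sum_congr rfl fun z _ => ?_
    rw [← mul_sum, sum_comm]
    simp only [← mul_sum, sum_apply_mul_inv_apply]
    by_cases hy : IsUnit y
    swap; · simp [MulChar.map_nonunit _ hy]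
    by_cases hz : IsUnit z
    swap; · simp [MulChar.map_nonunit _ hz]
    by_cases hy1 : IsUnit (1 - y)
    swap; · simp [MulChar.map_nonunit _ hy1]
    by_cases hz1 : IsUnit (1 - z)
    swap; · simp [MulChar.map_nonunit _ hz1]
    have key := sum_apply_constraint A hy hz hy1 hz1
    rw [hA, one_mul] at key
    rw [← key, mul_left_comm (Nat.totient q : ℂ), mul_sum univ _ (Nat.totient q : ℂ)]
    congr 1
    refine sum_congr rfl fun x _ => ?_
    split_ifs <;> ring
  rw [threeF₂, finsum_eq_sum_of_fintype, hsum]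
  have hfin : ∑ y, ∑ z, (B y * D⁻¹ (1 - y) * (C z * E⁻¹ (1 - z))) *
        (A (1 - y) * A (1 - z) * A⁻¹ (y + z - 1)) =
      normalizedSum B ⇑(A * E⁻¹) ⇑(A * D⁻¹) C ⇑A⁻¹ := by
    refine sum_congr rfl fun y _ => ?_
    rw [← sum_comp_sub _ 1]
    refine sum_congr rfl fun c _ => ?_
    rw [sub_sub_cancel, show y + (1 - c) - 1 = y - c by ring]
    simp only [MulChar.mul_apply]
    ring
  rw [hfin]
  field_simp

end Hypergeometric

section Reduction

lemma card_mul_sum_comp {R S : Type*} [AddCommGroup R] [AddCommGroup S] [Fintype R] [Fintype S]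
    {π : R →+ S} (hπ : Function.Surjective π) (f : S → ℂ) :
    Fintype.card S * ∑ x, f (π x) = Fintype.card R * ∑ y, f y := by
  classical
  have hfib (y : S) : #{x | π x = y} = #{x | π x = 0} :=
    AddMonoidHom.card_fiber_eq_of_mem_range π (hπ y) (hπ 0)
  have hsum (h : S → ℂ) : ∑ x, h (π x) = #{x | π x = 0} * ∑ y, h y := by
    rw [← sum_fiberwise_of_maps_to (g := π) (t := univ) (fun _ _ => mem_univ _), mul_sum]
    refine sum_congr rfl fun y _ => ?_
    rw [sum_congr rfl (g := fun _ => h y) fun x hx => by rw [(mem_filter.mp hx).2], sum_const,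
      nsmul_eq_mul, hfib]
  have hcard := hsum fun _ => 1
  simp only [sum_const, card_univ, nsmul_eq_mul, mul_one] at hcard
  rw [hsum, hcard]
  ring

lemma sum_comp_castHom {p q u : ℕ} [NeZero p] [NeZero q] (hq : q = u * p) (hpq : p ∣ q)
    (f : ZMod p → ℂ) : ∑ x, f (ZMod.castHom hpq (ZMod p) x) = u * ∑ y, f y := by
  have h := card_mul_sum_comp (π := (ZMod.castHom hpq (ZMod p)).toAddMonoidHom)
    (ZMod.castHom_surjective hpq) f
  have hp : (p : ℂ) ≠ 0 := NeZero.ne _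
  have hq' : (q : ℂ) = u * p := by exact_mod_cast hq
  rw [ZMod.card, ZMod.card, hq'] at h
  apply mul_left_cancel₀ hp
  rw [← mul_assoc, mul_comm (p : ℂ) u]
  exact h

lemma edgeSum_comp_castHom {p q u : ℕ} [NeZero p] [NeZero q] (hq : q = u * p) (hpq : p ∣ q)
    (f : ZMod p → ℂ) {h : ZMod q → ℂ} (hh : ∀ x, h x = f (ZMod.castHom hpq (ZMod p) x)) :
    edgeSum h h h h h h = (u : ℂ) ^ 4 * edgeSum f f f f f f := by
  simp only [edgeSum, hh, map_sub]
  set k : ZMod p → ZMod p → ZMod p → ZMod p → ℂ := fun x y z w =>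
    f (x - y) * f (x - z) * f (x - w) * f (y - z) * f (y - w) * f (z - w)
  have h₁ (x y z) := sum_comp_castHom hq hpq (k x y z)
  have h₂ (x y) := sum_comp_castHom hq hpq fun z => ∑ w, k x y z w
  have h₃ (x) := sum_comp_castHom hq hpq fun y => ∑ z, ∑ w, k x y z w
  have h₄ := sum_comp_castHom hq hpq fun x => ∑ y, ∑ z, ∑ w, k x y z w
  calc _ = ∑ x, ∑ y, ∑ z, ∑ w, k (ZMod.castHom hpq (ZMod p) x) (ZMod.castHom hpq (ZMod p) y)
        (ZMod.castHom hpq (ZMod p) z) (ZMod.castHom hpq (ZMod p) w) := rfl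
    _ = (u : ℂ) ^ 4 * ∑ x, ∑ y, ∑ z, ∑ w, k x y z w := by
      simp only [h₁, ← mul_sum, h₂, h₃, h₄]
      ring

lemma normalizedSum_comp_castHom {p q u : ℕ} [NeZero p] [NeZero q] (hq : q = u * p)
    (hpq : p ∣ q) {B C D E G : ZMod q → ℂ} {B' C' D' E' G' : ZMod p → ℂ}
    (hB : ∀ x, B x = B' (ZMod.castHom hpq (ZMod p) x))
    (hC : ∀ x, C x = C' (ZMod.castHom hpq (ZMod p) x))
    (hD : ∀ x, D x = D' (ZMod.castHom hpq (ZMod p) x))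
    (hE : ∀ x, E x = E' (ZMod.castHom hpq (ZMod p) x))
    (hG : ∀ x, G x = G' (ZMod.castHom hpq (ZMod p) x)) :
    normalizedSum B C D E G = (u : ℂ) ^ 2 * normalizedSum B' C' D' E' G' := by
  simp only [normalizedSum, hB, hC, hD, hE, hG, map_sub, map_one]
  have h₁ (b) := sum_comp_castHom hq hpq fun c =>
    B' b * C' c * D' (1 - b) * E' (1 - c) * G' (b - c)
  have h₂ := sum_comp_castHom hq hpq fun b =>
    ∑ c, B' b * C' c * D' (1 - b) * E' (1 - c) * G' (b - c)
  simp only [h₁, ← mul_sum, h₂]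
  ring

lemma jacobiSum_comp_castHom {p q u : ℕ} [NeZero p] [NeZero q] (hq : q = u * p)
    (hpq : p ∣ q) {A B : DirichletCharacter ℂ q} {A' B' : DirichletCharacter ℂ p}
    (hA : ∀ x, A x = A' (ZMod.castHom hpq (ZMod p) x))
    (hB : ∀ x, B x = B' (ZMod.castHom hpq (ZMod p) x)) :
    jacobiSum A B = u * jacobiSum A' B' := by
  simp only [jacobiSum, hA, hB, map_sub, map_one]
  exact sum_comp_castHom hq hpq fun x => A' x * B' (1 - x)

end Reduction

section Cliques

lemma sum_fin_succ_fun {V : Type*} [Fintype V] (n : ℕ) (f : (Fin (n + 1) → V) → ℂ) :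
    ∑ t, f t = ∑ x, ∑ t : Fin n → V, f (Fin.cons x t) := by
  rw [← Equiv.sum_comp (Fin.consEquiv fun _ => V), Fintype.sum_prod_type]
  rfl

lemma card_cliqueFinset_mul_factorial {V : Type*} [Fintype V] [DecidableEq V]
    (G : SimpleGraph V) [DecidableRel G.Adj] (n : ℕ) :
    #(G.cliqueFinset n) * n.factorial =
      #{t : Fin n → V | ∀ i j, i ≠ j → G.Adj (t i) (t j)} := by
  rw [card_eq_sum_card_fiberwise (f := fun t : Fin n → V => univ.image t)
    (t := G.cliqueFinset n), sum_const_nat (m := n.factorial)]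
  · intro s hs
    rw [SimpleGraph.mem_cliqueFinset_iff, SimpleGraph.isNClique_iff] at hs
    have hcard : #(univ : Finset (Fin n ↪ s)) = n.factorial := by
      rw [card_univ, Fintype.card_embedding_eq, Fintype.card_fin, Fintype.card_coe, hs.2,
        Nat.descFactorial_self]
    rw [← hcard]
    symm
    refine card_bij (fun e _ i => (e i : V)) ?_ ?_ ?_
    · intro e _
      simp only [mem_filter, mem_univ, true_and]
      refine ⟨fun i j hij => hs.1 (e i).2 (e j).2 fun h => hij (e.injective (Subtype.ext h)), ?_⟩
      apply eq_of_subset_of_card_le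
      · intro v hv
        obtain ⟨i, -, rfl⟩ := mem_image.mp hv
        exact (e i).2
      · have hinj : Function.Injective fun i => (e i : V) :=
          Subtype.val_injective.comp e.injective
        rw [card_image_of_injective _ hinj, hs.2, card_univ, Fintype.card_fin]
    · intro e _ e' _ h
      ext i
      exact congrFun h i
    · intro t ht
      simp only [mem_filter, mem_univ, true_and] at ht
      have hinj : Function.Injective t := fun i j hij => by
        by_contra hne
        exact G.ne_of_adj (ht.1 i j hne) hij
      refine ⟨⟨fun i => ⟨t i, ht.2 ▸ mem_image_of_mem t (mem_univ i)⟩, fun i j h =>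
        hinj (congrArg Subtype.val h)⟩, mem_univ _, rfl⟩
  · intro t ht
    simp only [coe_filter, mem_univ, true_and] at ht
    have hinj : Function.Injective t := fun i j hij => by
      by_contra hne
      exact G.ne_of_adj (ht i j hne) hij
    rw [mem_coe, SimpleGraph.mem_cliqueFinset_iff, SimpleGraph.isNClique_iff,
      card_image_of_injective _ hinj, card_univ, Fintype.card_fin]
    refine ⟨?_, rfl⟩
    intro a ha b hb hab
    obtain ⟨i, -, rfl⟩ := mem_image.mp ha
    obtain ⟨j, -, rfl⟩ := mem_image.mp hb
    exact ht i j fun h => hab (congrArg t h)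

lemma card_cliqueFinset_four {R : Type*} [CommRing R] [Fintype R] [DecidableEq R]
    (G : SimpleGraph R) [DecidableRel G.Adj] {h : R → ℂ}
    (hh : ∀ x y, h (x - y) = if G.Adj x y then 1 else 0) :
    24 * (#(G.cliqueFinset 4) : ℂ) = edgeSum h h h h h h := by
  have hcard := card_cliqueFinset_mul_factorial G 4
  have hind (t : Fin 4 → R) : (if ∀ i j, i ≠ j → G.Adj (t i) (t j) then (1 : ℂ) else 0) =
      h (t 0 - t 1) * h (t 0 - t 2) * h (t 0 - t 3) * h (t 1 - t 2) * h (t 1 - t 3) *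
        h (t 2 - t 3) := by
    simp only [hh, ← ite_and, mul_ite, mul_one, mul_zero]
    refine if_congr ?_ rfl rfl
    simp only [Fin.forall_fin_succ]
    simp [G.adj_comm]
    grind [G.adj_comm]
  calc 24 * (#(G.cliqueFinset 4) : ℂ) = ((#(G.cliqueFinset 4) * Nat.factorial 4 : ℕ) : ℂ) := by
        rw [mul_comm]; simp [Nat.factorial]
    _ = ∑ t : Fin 4 → R, if ∀ i j, i ≠ j → G.Adj (t i) (t j) then (1 : ℂ) else 0 := by
        rw [hcard]; simp
    _ = _ := by
        simp only [hind, sum_fin_succ_fun, edgeSum]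
        refine sum_congr rfl fun x _ => sum_congr rfl fun y _ => sum_congr rfl fun z _ =>
          sum_congr rfl fun w _ => ?_
        simp
        rfl

end Cliques

section PrimePower

variable {p k : ℕ}

lemma pow_prime_pow_eq_one_of_castHom_eq_one (hpq : p ∣ p ^ (k + 1)) {x : ZMod (p ^ (k + 1))}
    (hx : ZMod.castHom hpq (ZMod p) x = 1) : x ^ p ^ k = 1 := by
  obtain ⟨m, rfl⟩ := ZMod.intCast_surjective x
  rw [map_intCast, ← Int.cast_one, ZMod.intCast_eq_intCast_iff_dvd_sub, dvd_sub_comm] at hx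
  have h := dvd_sub_pow_of_dvd_sub (R := ZMod (p ^ (k + 1))) (p := p) (a := m) (b := 1)
    (by exact_mod_cast (Int.cast_dvd_cast (α := ZMod (p ^ (k + 1))) _ _ hx)) k
  rw [one_pow, ← Nat.cast_pow, ZMod.natCast_self, zero_dvd_iff] at h
  exact sub_eq_zero.mp h

lemma isUnit_castHom_iff [NeZero p] (hpq : p ∣ p ^ (k + 1)) (x : ZMod (p ^ (k + 1))) :
    IsUnit (ZMod.castHom hpq (ZMod p) x) ↔ IsUnit x := by
  obtain ⟨n, rfl⟩ := ZMod.natCast_zmod_surjective x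
  rw [map_natCast, ZMod.isUnit_iff_coprime, ZMod.isUnit_iff_coprime,
    Nat.coprime_pow_right_iff k.succ_pos]

/-- A character modulo a prime power whose order is prime to `p` is induced from level `p`. -/
lemma exists_character_mod_prime [NeZero p] (hpq : p ∣ p ^ (k + 1))
    (χ : DirichletCharacter ℂ (p ^ (k + 1))) {m : ℕ} (hm : χ ^ m = 1) (hmp : p.Coprime m) :
    ∃ ψ : DirichletCharacter ℂ p, ∀ x, χ x = ψ (ZMod.castHom hpq (ZMod p) x) := by
  have hfac : χ.FactorsThrough p := by
    rw [DirichletCharacter.factorsThrough_iff_ker_unitsMap hpq]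
    intro x hx
    rw [MonoidHom.mem_ker] at hx ⊢
    have hx' : (x : ZMod (p ^ (k + 1))) ^ p ^ k = 1 :=
      pow_prime_pow_eq_one_of_castHom_eq_one hpq (by
        have := congrArg Units.val hx
        rwa [ZMod.unitsMap_val] at this)
    ext
    rw [MulChar.coe_toUnitHom, Units.val_one]
    have h₁ : χ x ^ p ^ k = 1 := by rw [← map_pow, hx', map_one]
    have h₂ : χ x ^ m = 1 := by rw [← MulChar.pow_apply_coe, hm, MulChar.one_apply_coe]
    exact (pow_eq_one_iff_of_coprime (hmp.pow_left k)).mp ⟨h₁, h₂⟩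
  obtain ⟨_, ψ, hψ⟩ := hfac
  refine ⟨ψ, fun x => ?_⟩
  by_cases hx : IsUnit x
  · obtain ⟨u, rfl⟩ := hx
    rw [hψ, DirichletCharacter.changeLevel_eq_cast_of_dvd]
    rfl
  · rw [χ.map_nonunit hx, ψ.map_nonunit ((isUnit_castHom_iff hpq x).not.mpr hx)]

lemma pow_eq_one_iff_of_apply_eq [NeZero p] (hpq : p ∣ p ^ (k + 1))
    {χ : DirichletCharacter ℂ (p ^ (k + 1))} {ψ : DirichletCharacter ℂ p}
    (hψ : ∀ x, χ x = ψ (ZMod.castHom hpq (ZMod p) x)) (m : ℕ) : ψ ^ m = 1 ↔ χ ^ m = 1 := by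
  rw [MulChar.eq_one_iff, MulChar.eq_one_iff]
  constructor
  · intro h a
    have ha : IsUnit (ZMod.castHom hpq (ZMod p) a) := a.isUnit.map _
    have := h ha.unit
    rwa [MulChar.pow_apply_coe, IsUnit.unit_spec, ← hψ, ← MulChar.pow_apply_coe] at this
  · intro h a
    obtain ⟨x, hx⟩ := ZMod.castHom_surjective hpq (a : ZMod p)
    have hxu : IsUnit x := (isUnit_castHom_iff hpq x).mp (hx ▸ a.isUnit)
    have := h hxu.unit
    rwa [MulChar.pow_apply_coe, IsUnit.unit_spec, hψ, hx, ← MulChar.pow_apply_coe] at this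

end PrimePower

section EighthRoots

variable {p : ℕ} [Fact p.Prime]

lemma exists_sq_eq_two_of_mod_eight (hp8 : p % 8 = 1) : ∃ s : ZMod p, s ^ 2 = 2 := by
  obtain ⟨s, hs⟩ := (ZMod.exists_sq_eq_two_iff (p := p) (by lia)).mpr (Or.inl hp8)
  exact ⟨s, by rw [hs, sq]⟩

lemma exists_pow_four_eq_neg_one (hp8 : p % 8 = 1) : ∃ t : ZMod p, t ^ 4 = -1 := by
  obtain ⟨s, hs⟩ := exists_sq_eq_two_of_mod_eight hp8
  obtain ⟨r, hr⟩ := (ZMod.exists_sq_eq_neg_one_iff (p := p)).mpr (by lia)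
  have h2 : (2 : ZMod p) ≠ 0 := by
    intro h
    have : p ∣ 2 := (ZMod.natCast_eq_zero_iff 2 p).mp (by exact_mod_cast h)
    have := Nat.le_of_dvd two_pos this
    have := (Fact.out : p.Prime).two_le
    lia
  have hs0 : s ≠ 0 := by rintro rfl; exact h2 (by rw [← hs]; ring)
  refine ⟨(1 + r) / s, ?_⟩
  rw [div_pow, div_eq_iff (pow_ne_zero _ hs0)]
  linear_combination (-s ^ 2 - 2) * (-hs) - (r ^ 2 + 4 * r + 5) * hr

lemma apply_pow_four {R : Type*} [CommRing R] {ψ : MulChar R ℂ} (h4 : ψ ^ 4 = 1) {t : R}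
    (ht : IsUnit t) : ψ (t ^ 4) = 1 := by
  obtain ⟨u, rfl⟩ := ht
  rw [map_pow, ← MulChar.pow_apply_coe, h4, MulChar.one_apply_coe]

end EighthRoots

section PeisertIndicator

variable {n : ℕ} {g : (ZMod n)ˣ} {χ : DirichletCharacter ℂ n}

lemma apply_zpow_four (h4 : χ ^ 4 = 1) (m : ℤ) : χ ((g ^ (4 * m) : (ZMod n)ˣ) : ZMod n) = 1 := by
  rw [mul_comm, zpow_mul, show (4 : ℤ) = (4 : ℕ) from rfl, zpow_natCast, Units.val_pow_eq_pow_val]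
  exact apply_pow_four h4 (Units.isUnit _)

lemma mem_peisertSet_iff (hg : ∀ u : (ZMod n)ˣ, u ∈ Subgroup.zpowers g) (h4 : χ ^ 4 = 1)
    (hω : χ g ^ 2 = -1) (z : ZMod n) : z ∈ peisertSet n g ↔ χ z = 1 ∨ χ z = χ g := by
  constructor
  · rintro ⟨m, rfl | rfl⟩
    · exact Or.inl (apply_zpow_four h4 m)
    · right
      rw [Units.val_mul, map_mul, apply_zpow_four h4, mul_one]
  · intro h
    have hω0 : χ g ≠ 0 := by
      intro h0
      norm_num [h0] at hω
    have hz : IsUnit z := by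
      by_contra hz
      rw [χ.map_nonunit hz] at h
      rcases h with h | h
      · exact zero_ne_one h
      · exact hω0 h.symm
    obtain ⟨u, rfl⟩ := hz
    obtain ⟨m, rfl⟩ := Subgroup.mem_zpowers_iff.mp (hg u)
    have hm := Int.emod_add_mul_ediv m 4
    have hχ (r : ℕ) (hr : m % 4 = r) : g ^ m = g ^ r * g ^ (4 * (m / 4)) ∧
        χ ((g ^ m : (ZMod n)ˣ) : ZMod n) = χ g ^ r := by
      have : g ^ m = g ^ r * g ^ (4 * (m / 4)) := by
        rw [← zpow_natCast, ← zpow_add, ← hr, hm]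
      refine ⟨this, ?_⟩
      rw [this, Units.val_mul, map_mul, apply_zpow_four h4, mul_one, Units.val_pow_eq_pow_val,
        map_pow]
    have hr : m % 4 = (0 : ℕ) ∨ m % 4 = (1 : ℕ) ∨ m % 4 = (2 : ℕ) ∨ m % 4 = (3 : ℕ) := by lia
    rcases hr with hr | hr | hr | hr <;> obtain ⟨hgm, hχm⟩ := hχ _ hr
    · exact ⟨m / 4, Or.inl (by rw [hgm, pow_zero, one_mul])⟩
    · exact ⟨m / 4, Or.inr (by rw [hgm, pow_one])⟩
    · rw [hχm] at h
      grind
    · rw [hχm] at h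
      grind

end PeisertIndicator

lemma nonzeroInd_add_quarticSign_div_two {F : Type*} [Field F] [DecidableEq F] {ψ : MulChar F ℂ}
    {ω : ℂ} (h4 : ψ ^ 4 = 1) (hω : ω ^ 2 = -1) (x : F) :
    (nonzeroInd x + quarticSign ψ ω x) / 2 =
      open Classical in if ψ x = 1 ∨ ψ x = ω then 1 else 0 := by
  have hω0 : ω ≠ 0 := by
    rintro rfl
    norm_num at hω
  by_cases hx : x = 0
  · simp [hx, nonzeroInd, quarticSign, MulChar.map_zero, hω0.symm]
  · have h : ψ x ^ 4 = 1 := by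
      rw [← map_pow]
      exact apply_pow_four h4 (isUnit_iff_ne_zero.mpr hx)
    have hinv : ψ⁻¹ x = ψ x ^ 3 := by
      rw [MulChar.inv_eq_cube h4, MulChar.pow_apply' _ (by norm_num)]
    simp only [nonzeroInd, quarticSign, hinv, if_neg hx]
    have hcases : (ψ x - 1) * ((ψ x - ω) * ((ψ x + 1) * (ψ x + ω))) = 0 := by
      linear_combination h + (1 - ψ x ^ 2) * hω
    rcases mul_eq_zero.mp hcases with h' | h'
    · rw [sub_eq_zero.mp h', if_pos (Or.inl rfl)]
      ring
    rcases mul_eq_zero.mp h' with h' | h'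
    · rw [sub_eq_zero.mp h', if_pos (Or.inr rfl)]
      linear_combination (ω ^ 2 + ω - 2) / 4 * hω
    rw [if_neg (by grind)]
    rcases mul_eq_zero.mp h' with h' | h'
    · rw [eq_neg_of_add_eq_zero_left h']
      ring
    · rw [eq_neg_of_add_eq_zero_left h']
      linear_combination (-ω ^ 2 - ω + 2) / 4 * hω

lemma peisertGraph_adj_iff {n : ℕ} {g : (ZMod n)ˣ} (h0 : (0 : ZMod n) ∉ peisertSet n g)
    (hneg : ∀ z, -z ∈ peisertSet n g ↔ z ∈ peisertSet n g) (x y : ZMod n) :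
    (peisertGraph n g).Adj x y ↔ x - y ∈ peisertSet n g := by
  rw [peisertGraph, SimpleGraph.fromRel_adj, ← neg_sub x y, hneg, or_self]
  refine ⟨And.right, fun h => ⟨?_, h⟩⟩
  rintro rfl
  exact h0 (sub_self x ▸ h)

theorem k4_peisert_like (p α : ℕ) (hp : p.Prime) (hp8 : p % 8 = 1) (hα : 1 ≤ α)
    (q : ℕ) (hq : q = p ^ α) [NeZero q]
    (g : (ZMod q)ˣ) (hg : ∀ u : (ZMod q)ˣ, u ∈ Subgroup.zpowers g)
    (χ₄ : DirichletCharacter ℂ q) (hord : orderOf χ₄ = 4) :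
    let ρ : ℂ := jacobiSum χ₄ χ₄
    let ξ : ℂ := jacobiSum χ₄ (χ₄ ^ 2)
    let M₃ : ℂ := (q : ℂ) ^ 2 * threeF₂ χ₄ (conjChar χ₄) (conjChar χ₄) (χ₄ ^ 2) 1 1
    let M₅ : ℂ := (q : ℂ) ^ 2 * threeF₂ χ₄ χ₄ (conjChar χ₄) 1 1 1
    (((peisertGraph q g).cliqueFinset 4).card : ℂ) =
      (p : ℂ) ^ (2 * α - 1) * ((p : ℂ) - 1) / 3072 *
        (2 * (p : ℂ) ^ (2 * α - 2) * ((p : ℂ) ^ 2 - 20 * (p : ℂ) + 81) +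
          2 * (ρ.im : ℂ) ^ 2 + 4 * (ρ.im : ℂ) * (ξ.im : ℂ) - (M₃.re : ℂ) + 3 * M₅) := by
  intro ρ ξ M₃ M₅
  obtain ⟨k, rfl⟩ := Nat.exists_eq_add_of_le' hα
  subst hq
  have : Fact p.Prime := ⟨hp⟩
  have : NeZero p := ⟨hp.ne_zero⟩
  have hpq : p ∣ p ^ (k + 1) := dvd_pow_self p k.succ_ne_zero
  have hqu : p ^ (k + 1) = p ^ k * p := pow_succ p k
  have hp2 : p ≠ 2 := by lia
  have hχ4 : χ₄ ^ 4 = 1 := hord ▸ pow_orderOf_eq_one χ₄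
  have hχ2 : χ₄ ^ 2 ≠ 1 := pow_ne_one_of_lt_orderOf two_ne_zero (by lia)
  obtain ⟨ψ, hψ⟩ := exists_character_mod_prime hpq χ₄ hχ4
    (((Nat.coprime_primes hp Nat.prime_two).mpr hp2).pow_right 2)
  set π := ZMod.castHom hpq (ZMod p)
  have h4 : ψ ^ 4 = 1 := (pow_eq_one_iff_of_apply_eq hpq hψ 4).mpr hχ4
  have h2 : ψ ^ 2 ≠ 1 := (pow_eq_one_iff_of_apply_eq hpq hψ 2).not.mpr hχ2
  have hψneg : ψ (-1) = 1 := by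
    obtain ⟨t, ht⟩ := exists_pow_four_eq_neg_one hp8
    rw [← ht]
    refine apply_pow_four h4 (isUnit_iff_ne_zero.mpr ?_)
    rintro rfl
    simp at ht
  have hψfour : ψ 4 = 1 := by
    obtain ⟨s, hs⟩ := exists_sq_eq_two_of_mod_eight hp8
    have hs4 : s ^ 4 = 4 := by linear_combination (s ^ 2 + 2) * hs
    rw [← hs4]
    refine apply_pow_four h4 (isUnit_iff_ne_zero.mpr ?_)
    rintro rfl
    have h1 := (ZMod.natCast_eq_zero_iff 2 p).mp (by push_cast; rw [← hs]; ring)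
    exact hp2 ((Nat.prime_dvd_prime_iff_eq hp Nat.prime_two).mp h1)
  have hχneg : χ₄ (-1) = 1 := by rw [hψ, map_neg, map_one, hψneg]
  have hone : (1 : DirichletCharacter ℂ (p ^ (k + 1))) (-1) = 1 :=
    MulChar.one_apply isUnit_one.neg
  have hω4 : χ₄ g ^ 4 = 1 := by rw [← MulChar.pow_apply_coe, hχ4, MulChar.one_apply_coe]
  have hω : χ₄ g ^ 2 = -1 := by
    have : (χ₄ g ^ 2 - 1) * (χ₄ g ^ 2 + 1) = 0 := by linear_combination hω4
    rcases mul_eq_zero.mp this with h | h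
    · refine absurd ((MulChar.eq_iff hg _ _).mpr ?_) hχ2
      rw [MulChar.pow_apply_coe, MulChar.one_apply_coe, sub_eq_zero.mp h]
    · exact eq_neg_of_add_eq_zero_left h
  have hmem := mem_peisertSet_iff hg hχ4 hω
  have hadj := peisertGraph_adj_iff (n := p ^ (k + 1)) (g := g)
    (by
      rw [hmem, hψ, map_zero, MulChar.map_zero]
      rintro (h | h)
      · exact zero_ne_one h
      · rw [← h] at hω
        norm_num at hω)
    (fun z => by rw [hmem, hmem, ← neg_one_mul, map_mul, hχneg, one_mul])
  classical
  set f : ZMod p → ℂ := nonzeroInd + quarticSign ψ (χ₄ g) with hf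
  have hclique := card_cliqueFinset_four (peisertGraph (p ^ (k + 1)) g)
    (h := fun z => 2⁻¹ * f (π z)) fun x y => by
      simp only [hadj, hmem, hψ (x - y)]
      rw [← nonzeroInd_add_quarticSign_div_two h4 hω, hf, Pi.add_apply]
      ring
  rw [edgeSum_comp_castHom hqu hpq (fun z => 2⁻¹ * f z) (fun _ => rfl), edgeSum_const_mul,
    edgeSum_nonzeroInd_add_quarticSign h4 h2 hψneg hω hf, ZMod.card] at hclique
  have hψinv (x) : χ₄⁻¹ x = ψ⁻¹ (π x) := by
    rw [MulChar.inv_eq_cube h4, inv_eq_of_mul_eq_one_right (a := χ₄) (b := χ₄ ^ 3)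
      (by rw [← hχ4, pow_succ' _ 3]), MulChar.pow_apply' _ three_ne_zero,
      MulChar.pow_apply' _ three_ne_zero, hψ]
  have hρ : ρ = (p ^ k : ℕ) * jacobiSum ψ ψ := jacobiSum_comp_castHom hqu hpq hψ hψ
  have hξ : ξ = (p ^ k : ℕ) * jacobiSum ψ ψ := by
    rw [jacobiSum_self_eq_jacobiSum_sq h4 h2 (by rwa [ZMod.ringChar_zmod_n]) hψfour]
    refine jacobiSum_comp_castHom hqu hpq hψ fun x => ?_
    rw [MulChar.pow_apply' _ two_ne_zero, MulChar.pow_apply' _ two_ne_zero, hψ]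
  have hM₃ : M₃ = (p ^ k : ℕ) ^ 2 * normalizedSum ⇑ψ⁻¹ ψ ⇑ψ⁻¹ ⇑ψ⁻¹ ⇑ψ⁻¹ := by
    have hχinv : χ₄ * (χ₄ ^ 2)⁻¹ = χ₄⁻¹ := by group
    simp only [M₃]
    rw [conjChar_eq_inv, sq_mul_threeF₂_one _ _ _ _ _ hχneg (by
      rw [MulChar.pow_apply' _ two_ne_zero, hχneg, one_pow]) hone, inv_one, mul_one, hχinv]
    exact normalizedSum_comp_castHom hqu hpq hψinv hψ hψinv hψinv hψinv
  have hM₅ : M₅ = (p ^ k : ℕ) ^ 2 * normalizedSum ψ ψ ψ ⇑ψ⁻¹ ⇑ψ⁻¹ := by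
    simp only [M₅]
    rw [conjChar_eq_inv, sq_mul_threeF₂_one _ _ _ _ _ hχneg hone hone, inv_one, mul_one]
    exact normalizedSum_comp_castHom hqu hpq hψ hψ hψ hψinv hψinv
  rw [hρ, hξ, hM₃, hM₅]
  have hre (z : ℂ) : ((((p ^ k : ℕ) : ℂ) ^ 2 * z).re : ℂ) = (p : ℂ) ^ (2 * k) * z.re := by
    rw [← Nat.cast_pow, ← Complex.ofReal_natCast, Complex.re_ofReal_mul]
    push_cast
    ring
  have him (z : ℂ) : ((((p ^ k : ℕ) : ℂ) * z).im : ℂ) = (p : ℂ) ^ k * z.im := by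
    rw [← Complex.ofReal_natCast, Complex.im_ofReal_mul]
    push_cast
    ring
  rw [hre, him, show 2 * (k + 1) - 1 = 2 * k + 1 by lia, show 2 * (k + 1) - 2 = 2 * k by lia]
  push_cast at hclique ⊢
  linear_combination hclique / 24
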